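/- If L and L′ are finite lattices and there exists a surjective sup-map φ : L → L′, then nk(L) ≥ nk(L′). -/

import Mathlib

/-- A list `ℓ 0, …, ℓ (k-1)` of elements of a poset is c-independent with witness
`m 0, …, m (k-1)`: `ℓ j ≰ m j` for all `j`, and `ℓ i ≤ m j` whenever `i < j`. -/
def CIndepList {P : Type*} [PartialOrder P] {k : ℕ} (ℓ m : Fin k → P) : Prop :=
  (∀ j, ¬ ℓ j ≤ m j) ∧ ∀ i j : Fin k, i < j → ℓ i ≤ m j

/-- The c-rank of a poset: the maximum cardinality of a c-independent subset,
i.e. the largest `k` admitting an injective c-independent list of length `k`. -/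
noncomputable def crank (P : Type*) [PartialOrder P] : ℕ :=
  sSup {k | ∃ ℓ m : Fin k → P, Function.Injective ℓ ∧ CIndepList ℓ m}

/-!
A map preserving finite joins on a finite lattice has an upper adjoint `u`, sending `y` to the join
of all `x` with `φ x ≤ y`. By the adjunction, `φ ∘ ℓ` is c-independent with witness `m` exactly when
`ℓ` is c-independent with witness `u ∘ m`; when `φ` is surjective, arbitrary preimages of a
c-independent list therefore form a c-independent list.
-/

section CIndep

variable {P Q : Type*} [PartialOrder P] [PartialOrder Q] {k : ℕ}

theorem CIndepList.injective {ℓ m : Fin k → P} (h : CIndepList ℓ m) : Function.Injective ℓ :=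
  Function.Injective.of_lt_imp_ne fun i j hij heq => h.1 j (heq ▸ h.2 i j hij)

variable (P) in
/-- The lengths of the c-independent lists of a poset, whose supremum is the c-rank. No injectivity
is imposed on the lists, since c-independence implies it. -/
def cindepLengths : Set ℕ :=
  {k | ∃ ℓ m : Fin k → P, CIndepList ℓ m}

variable (P) in
theorem crank_eq_sSup_cindepLengths : crank P = sSup (cindepLengths P) := by
  refine congrArg sSup (Set.ext fun k => ?_)
  exact exists₂_congr fun ℓ m => and_iff_right_of_imp CIndepList.injective

variable (P) in
theorem bddAbove_cindepLengths [Finite P] : BddAbove (cindepLengths P) := by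
  refine ⟨Nat.card P, ?_⟩
  rintro k ⟨ℓ, m, h⟩
  simpa only [Nat.card_fin] using Nat.card_le_card_of_injective ℓ h.injective

theorem cindepList_comp_iff_of_galoisConnection {l : P → Q} {u : Q → P}
    (gc : GaloisConnection l u) {ℓ : Fin k → P} {m : Fin k → Q} :
    CIndepList (l ∘ ℓ) m ↔ CIndepList ℓ (u ∘ m) := by
  simp only [CIndepList, Function.comp_apply, gc.le_iff_le]

theorem cindepLengths_subset_of_galoisConnection {l : P → Q} {u : Q → P}
    (gc : GaloisConnection l u) (hl : Function.Surjective l) :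
    cindepLengths Q ⊆ cindepLengths P := by
  rintro k ⟨ℓ, m, h⟩
  obtain ⟨ℓ', rfl⟩ := hl.comp_left ℓ
  exact ⟨ℓ', u ∘ m, (cindepList_comp_iff_of_galoisConnection gc).1 h⟩

theorem crank_le_of_surjective_supMap_general {l : P → Q} {u : Q → P}
    (gc : GaloisConnection l u) (hl : Function.Surjective l)
    (hP : BddAbove (cindepLengths P)) : crank Q ≤ crank P := by
  rw [crank_eq_sSup_cindepLengths, crank_eq_sSup_cindepLengths]
  exact csSup_le_csSup' hP (cindepLengths_subset_of_galoisConnection gc hl)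

end CIndep

section SupMap

variable {L L' : Type*} [SemilatticeSup L] [OrderBot L] [SemilatticeSup L'] [OrderBot L']
  {φ : L → L'}

theorem monotone_of_map_finset_sup (hsup : ∀ X : Finset L, φ (X.sup id) = X.sup φ) :
    Monotone φ := by
  classical
  intro a b hab
  have map_sup : φ (a ⊔ b) = φ a ⊔ φ b := by
    simpa only [Finset.sup_insert, Finset.sup_singleton, id] using hsup {a, b}
  rw [← sup_eq_right.2 hab, map_sup]
  exact le_sup_left

theorem exists_galoisConnection_of_map_finset_sup [Finite L]
    (hsup : ∀ X : Finset L, φ (X.sup id) = X.sup φ) : ∃ u : L' → L, GaloisConnection φ u := by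
  classical
  cases nonempty_fintype L
  refine ⟨fun y => ({x | φ x ≤ y} : Finset L).sup id, fun x y => ⟨fun hxy => ?_, fun hx => ?_⟩⟩
  · exact Finset.le_sup (f := id) ((Finset.mem_filter_univ x).2 hxy)
  · calc φ x ≤ φ (({x | φ x ≤ y} : Finset L).sup id) := monotone_of_map_finset_sup hsup hx
      _ = ({x | φ x ≤ y} : Finset L).sup φ := hsup _
      _ ≤ y := Finset.sup_le fun z hz => (Finset.mem_filter_univ z).1 hz

end SupMap

/-- If there is a surjective sup-map `φ : L → L'` between finite lattices,
then `crank L ≥ crank L'`. -/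
theorem crank_le_of_surjective_supMap {L L' : Type*}
    [Lattice L] [Fintype L] [OrderBot L] [Lattice L'] [Fintype L'] [OrderBot L']
    (φ : L → L') (hsur : Function.Surjective φ)
    (hsup : ∀ X : Finset L, φ (X.sup id) = X.sup φ) :
    crank L' ≤ crank L := by
  obtain ⟨_, gc⟩ := exists_galoisConnection_of_map_finset_sup hsup
  exact crank_le_of_surjective_supMap_general gc hsur (bddAbove_cindepLengths L)
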